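/- arXiv:2305.07275 — 3 statements merged into one kernel-verified Lean document; each statement's English description precedes it below -/
import Mathlib

section
/- Let Z ⊆ ℝ^n be closed. If for each player i the preference map P_i : ℝ^n ⇉ ℝ^{n_i} is lower semicontinuous on Z, then the set-valued map T(y) = ∏_i T_i(y), where T_i(y) = co(𝒩_i(y) ∩ S_i) with 𝒩_i(y) = (co(P_i(y)) − {y_i})° and S_i the unit sphere of ℝ^{n_i}, is upper semicontinuous on Z. -/
open scoped RealInnerProductSpace

/-- `ℝ^m` as a Euclidean space. -/
abbrev Vec (m : ℕ) : Type := EuclideanSpace ℝ (Fin m)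

/-- The joint strategy space `ℝ^n = ∏_{i=1}^N ℝ^{n_i}`. -/
abbrev Strat (N : ℕ) (d : Fin N → ℕ) : Type := PiLp 2 fun i : Fin N => Vec (d i)

/-- Lower semicontinuity of a set-valued map `F` on a set `A`. -/
def LscOn {α β : Type*} [TopologicalSpace α] [TopologicalSpace β]
    (F : α → Set β) (A : Set α) : Prop :=
  ∀ a ∈ A, ∀ V : Set β, IsOpen V → (F a ∩ V).Nonempty →
    ∃ U : Set α, IsOpen U ∧ a ∈ U ∧ ∀ a' ∈ U ∩ A, (F a' ∩ V).Nonempty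

/-- Upper semicontinuity of a set-valued map `F` on a set `A`. -/
def UscOn {α β : Type*} [TopologicalSpace α] [TopologicalSpace β]
    (F : α → Set β) (A : Set α) : Prop :=
  ∀ a ∈ A, ∀ V : Set β, IsOpen V → F a ⊆ V →
    ∃ U : Set α, IsOpen U ∧ a ∈ U ∧ ∀ a' ∈ U ∩ A, F a' ⊆ V

/-!
If a vector `w` is not normal to `P_i(y)` at `y_i`, then some `z ∈ P_i(y)` satisfies
`⟪w, z - y_i⟫ > 0`. Lower semicontinuity provides points of `P_i(y')` close to `z` for `y'` near
`y`, so the inequality persists for all `(y', w')` near `(y, w)`: the graph of the normal cone is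
closed over `Z`. Passing from `P_i` to its convex hull does not change the cone. A correspondence
with closed graph and values in a compact set, here the unit sphere, is upper semicontinuous.
Upper semicontinuity then survives convex hulls and products because all values are compact:
by Carathéodory's theorem, the convex hull of a compact set in finite dimension is compact.
-/

open Filter Topology

section Bridges

variable {α β : Type*} [TopologicalSpace α] [TopologicalSpace β] {F : α → Set β} {A : Set α}

theorem lscOn_iff_lowerHemicontinuousOn : LscOn F A ↔ LowerHemicontinuousOn F A := by
  simp only [LscOn, lowerHemicontinuousOn_iff, lowerHemicontinuousWithinAt_iff,
    Filter.Eventually, mem_nhdsWithin, Set.subset_def, Set.mem_ofPred_eq]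

theorem uscOn_iff_upperHemicontinuousOn : UscOn F A ↔ UpperHemicontinuousOn F A := by
  simp only [UscOn, upperHemicontinuousOn_iff_forall_isOpen, Filter.Eventually, mem_nhdsWithin]
  rfl

end Bridges

section Hemicontinuity

variable {α : Type*} [TopologicalSpace α] {s : Set α} {a : α}

theorem upperHemicontinuousWithinAt_inter_of_isCompact {β : Type*} [TopologicalSpace β]
    {F : α → Set β} {K : Set β} (hK : IsCompact K)
    (hF : ∀ w ∈ K, w ∉ F a → ∀ᶠ q in 𝓝[s] a ×ˢ 𝓝 w, q.2 ∉ F q.1) :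
    UpperHemicontinuousWithinAt (fun x ↦ F x ∩ K) s a := by
  refine .of_forall_isOpen fun u hu hFu ↦ ?_
  have avoid : ∀ᶠ q in 𝓝[s] a ×ˢ 𝓝ˢ (K \ u), q.2 ∉ F q.1 :=
    (hK.diff hu).mem_prod_nhdsSet_of_forall fun w hw ↦
      hF w hw.1 fun hwF ↦ hw.2 (hFu ⟨hwF, hw.1⟩)
  filter_upwards [avoid.curry] with x hx w hw
  by_contra hwu
  exact hx.self_of_nhdsSet w ⟨hw.2, hwu⟩ hw.1

theorem pi_nhdsSet_le_nhdsSet_univ_pi {ι : Type*} {X : ι → Type*} [∀ i, TopologicalSpace (X i)]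
    {K : ∀ i, Set (X i)} (hK : ∀ i, IsCompact (K i)) :
    Filter.pi (fun i ↦ 𝓝ˢ (K i)) ≤ 𝓝ˢ (Set.univ.pi K) := by
  refine Filter.le_iff_ultrafilter.2 fun G hG ↦ ?_
  have converges : ∀ i, ∃ x ∈ K i, Tendsto (Function.eval i) G (𝓝 x) := by
    intro i
    by_contra! h
    have hdisj : Disjoint (𝓝ˢ (K i)) (G.map (Function.eval i)) :=
      (hK i).disjoint_nhdsSet_left.2 fun x hx ↦ (Ultrafilter.disjoint_iff_not_le.2 (h x hx)).symm
    exact (G.map (Function.eval i)).neBot.ne (hdisj.symm.eq_bot_of_le (tendsto_pi.1 hG i))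
  choose x hxK hx using converges
  calc (G : Filter (∀ i, X i)) ≤ 𝓝 x := tendsto_pi_nhds.2 hx
    _ ≤ 𝓝ˢ (Set.univ.pi K) := nhds_le_nhdsSet fun i _ ↦ hxK i

theorem upperHemicontinuousWithinAt_univ_pi {ι : Type*} {X : ι → Type*}
    [∀ i, TopologicalSpace (X i)] {F : ∀ i, α → Set (X i)}
    (hF : ∀ i, UpperHemicontinuousWithinAt (F i) s a) (hc : ∀ i, IsCompact (F i a)) :
    UpperHemicontinuousWithinAt (fun x ↦ Set.univ.pi fun i ↦ F i x) s a := by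
  refine .of_forall_isOpen fun u hu hFu ↦ ?_
  have hu' : u ∈ Filter.pi fun i ↦ 𝓝ˢ (F i a) :=
    pi_nhdsSet_le_nhdsSet_univ_pi hc (hu.mem_nhdsSet.2 hFu)
  obtain ⟨I, hI, V, hV, hVu⟩ := Filter.mem_pi.1 hu'
  have hFV : ∀ᶠ x in 𝓝[s] a, ∀ i ∈ I, V i ∈ 𝓝ˢ (F i x) :=
    (Filter.eventually_all_finite hI).2 fun i _ ↦ hF i (V i) (hV i)
  filter_upwards [hFV] with x hx v hv
  exact hVu fun i hi ↦ subset_of_mem_nhdsSet (hx i hi) (hv i trivial)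

theorem upperHemicontinuousWithinAt_convexHull {E : Type*} [SeminormedAddCommGroup E]
    [NormedSpace ℝ E] {F : α → Set E} (hF : UpperHemicontinuousWithinAt F s a)
    (hc : IsCompact (convexHull ℝ (F a))) :
    UpperHemicontinuousWithinAt (fun x ↦ convexHull ℝ (F x)) s a := by
  refine .of_forall_isOpen fun u hu hFu ↦ ?_
  obtain ⟨δ, hδ, hδu⟩ := hc.exists_thickening_subset_open hu hFu
  have near : ∀ᶠ x in 𝓝[s] a, F x ⊆ Metric.thickening δ (convexHull ℝ (F a)) :=
    hF.forall_isOpen _ Metric.isOpen_thickening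
      ((subset_convexHull ℝ (F a)).trans (Metric.self_subset_thickening hδ _))
  filter_upwards [near] with x hx
  exact (convexHull_min hx ((convex_convexHull ℝ (F a)).thickening δ)).trans hδu

end Hemicontinuity

section Caratheodory

theorem convexHull_eq_iUnion_image_stdSimplex (𝕜 : Type*) {E : Type*} [Field 𝕜] [LinearOrder 𝕜]
    [IsStrictOrderedRing 𝕜] [AddCommGroup E] [Module 𝕜 E] [FiniteDimensional 𝕜 E] (s : Set E) :
    convexHull 𝕜 s = ⋃ k : Fin (Module.finrank 𝕜 E + 2),
      (fun p : (Fin k → 𝕜) × (Fin k → E) ↦ ∑ j, p.1 j • p.2 j) ''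
        (stdSimplex 𝕜 (Fin k) ×ˢ Set.univ.pi fun _ ↦ s) := by
  refine Set.Subset.antisymm (fun x hx ↦ ?_) (Set.iUnion_subset fun k ↦ ?_)
  · obtain ⟨ι, _, z, w, hz, hind, hw, hw_sum, rfl⟩ := eq_pos_convex_span_of_mem_convexHull hx
    have hcard : Fintype.card ι < Module.finrank 𝕜 E + 2 := by
      have := hind.card_le_finrank_succ
      have := Submodule.finrank_le (vectorSpan 𝕜 (Set.range z))
      lia
    let e := (Fintype.equivFin ι).symm
    exact Set.mem_iUnion.2 ⟨⟨_, hcard⟩, (w ∘ e, z ∘ e),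
      ⟨⟨fun j ↦ (hw _).le, (e.sum_comp w).trans hw_sum⟩, fun j _ ↦ hz ⟨_, rfl⟩⟩,
      e.sum_comp fun i ↦ w i • z i⟩
  · rintro _ ⟨⟨w, z⟩, ⟨⟨hw, hw_sum⟩, hz⟩, rfl⟩
    exact (convex_convexHull 𝕜 s).sum_mem (fun j _ ↦ hw j) hw_sum
      fun j _ ↦ subset_convexHull 𝕜 s (hz j trivial)

theorem isCompact_convexHull {E : Type*} [AddCommGroup E] [Module ℝ E] [TopologicalSpace E]
    [ContinuousAdd E] [ContinuousSMul ℝ E] [FiniteDimensional ℝ E] {K : Set E}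
    (hK : IsCompact K) : IsCompact (convexHull ℝ K) := by
  rw [convexHull_eq_iUnion_image_stdSimplex]
  exact isCompact_iUnion fun k ↦
    ((isCompact_stdSimplex ℝ _).prod (isCompact_univ_pi fun _ ↦ hK)).image (by fun_prop)

end Caratheodory

section NormalCone

variable {E : Type*} [NormedAddCommGroup E] [InnerProductSpace ℝ E]

/-- The normal cone `(C - {p})°` of `C` at `p`, that is, the polar cone of the translate of `C`
by `-p`. Neither `p ∈ C` nor convexity of `C` is assumed. -/
def normalCone (C : Set E) (p : E) : Set E := {w | ∀ z ∈ C, ⟪w, z - p⟫ ≤ 0}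

theorem notMem_normalCone_iff {C : Set E} {p w : E} :
    w ∉ normalCone C p ↔ ∃ z ∈ C, 0 < ⟪w, z - p⟫ := by
  simp [normalCone]

theorem isClosed_normalCone (C : Set E) (p : E) : IsClosed (normalCone C p) := by
  simp only [normalCone, Set.ofPred_forall]
  exact isClosed_biInter fun z _ ↦ isClosed_le (by fun_prop) continuous_const

theorem normalCone_convexHull (C : Set E) (p : E) :
    normalCone (convexHull ℝ C) p = normalCone C p := by
  ext w
  have halfSpace_convex : Convex ℝ {z : E | ⟪w, z - p⟫ ≤ 0} := by
    simp only [inner_sub_right, sub_nonpos]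
    exact convex_halfSpace_le (innerₛₗ ℝ w).isLinear ⟪w, p⟫
  exact halfSpace_convex.convexHull_subset_iff

variable {α : Type*} [TopologicalSpace α] {s : Set α} {a : α} {P : α → Set E} {p : α → E}

theorem eventually_notMem_normalCone (hP : LowerHemicontinuousWithinAt P s a)
    (hp : ContinuousWithinAt p s a) {w : E} (hw : w ∉ normalCone (P a) (p a)) :
    ∀ᶠ q in 𝓝[s] a ×ˢ 𝓝 w, q.2 ∉ normalCone (P q.1) (p q.1) := by
  obtain ⟨z, hz, hwz⟩ := notMem_normalCone_iff.1 hw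
  have hlim : Tendsto (fun q : (α × E) × E ↦ ⟪q.1.2, q.2 - p q.1.1⟫)
      ((𝓝[s] a ×ˢ 𝓝 w) ×ˢ 𝓝 z) (𝓝 ⟪w, z - p a⟫) :=
    (tendsto_snd.comp tendsto_fst).inner
      (tendsto_snd.sub (hp.tendsto.comp (tendsto_fst.comp tendsto_fst)))
  obtain ⟨A, hA, B, hB, hAB⟩ := eventually_prod_iff.1 (hlim.eventually_const_lt hwz)
  obtain ⟨V, hVB, hV, hzV⟩ := eventually_nhds_iff.1 hB
  have hPV : ∀ᶠ x in 𝓝[s] a, (P x ∩ V).Nonempty :=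
    lowerHemicontinuousWithinAt_iff.1 hP V hV ⟨z, hz, hzV⟩
  filter_upwards [hA, hPV.prod_inl (𝓝 w)] with q hq ⟨z', hz', hz'V⟩
  exact notMem_normalCone_iff.2 ⟨z', hz', hAB hq (hVB z' hz'V)⟩

theorem upperHemicontinuousWithinAt_normalCone_inter (hP : LowerHemicontinuousWithinAt P s a)
    (hp : ContinuousWithinAt p s a) {K : Set E} (hK : IsCompact K) :
    UpperHemicontinuousWithinAt (fun x ↦ normalCone (P x) (p x) ∩ K) s a :=
  upperHemicontinuousWithinAt_inter_of_isCompact hK fun _ _ ↦ eventually_notMem_normalCone hP hp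

end NormalCone

section UnitNormalHull

variable {E : Type*} [NormedAddCommGroup E] [InnerProductSpace ℝ E]

/-- The convex hull of the unit vectors normal to `C` at `p`. For `C = co(P_i(y))` and `p = y_i`
this is the factor `T_i(y)`; it is empty when no unit vector is normal to `C` at `p`. -/
def unitNormalHull (C : Set E) (p : E) : Set E :=
  convexHull ℝ (normalCone C p ∩ Metric.sphere 0 1)

theorem unitNormalHull_convexHull (C : Set E) (p : E) :
    unitNormalHull (convexHull ℝ C) p = unitNormalHull C p := by
  rw [unitNormalHull, normalCone_convexHull, unitNormalHull]

variable [FiniteDimensional ℝ E]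

theorem isCompact_unitNormalHull (C : Set E) (p : E) : IsCompact (unitNormalHull C p) :=
  isCompact_convexHull ((isCompact_sphere 0 1).inter_left (isClosed_normalCone C p))

theorem upperHemicontinuousWithinAt_unitNormalHull {α : Type*} [TopologicalSpace α] {s : Set α}
    {a : α} {P : α → Set E} {p : α → E} (hP : LowerHemicontinuousWithinAt P s a)
    (hp : ContinuousWithinAt p s a) :
    UpperHemicontinuousWithinAt (fun x ↦ unitNormalHull (P x) (p x)) s a :=
  upperHemicontinuousWithinAt_convexHull
    (upperHemicontinuousWithinAt_normalCone_inter hP hp (isCompact_sphere 0 1))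
    (isCompact_unitNormalHull (P a) (p a))

end UnitNormalHull

/-- For infinite `ι`, `PiLp 2 E` is the full product `∏ i, E i` with the product topology, not the
space of square-summable families. -/
theorem T_usc_of_lsc_preferences_general {ι : Type*} {E : ι → Type*}
    [∀ i, NormedAddCommGroup (E i)] [∀ i, InnerProductSpace ℝ (E i)]
    [∀ i, FiniteDimensional ℝ (E i)] {Z : Set (PiLp 2 E)} {P : ∀ i, PiLp 2 E → Set (E i)}
    (hP : ∀ i, LscOn (P i) Z) :
    UscOn (fun y ↦ {v : PiLp 2 E | ∀ i, v i ∈ unitNormalHull (convexHull ℝ (P i y)) (y i)}) Z := by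
  simp only [unitNormalHull_convexHull, uscOn_iff_upperHemicontinuousOn]
  intro a ha
  have usc_factor (i) :
      UpperHemicontinuousWithinAt (fun y ↦ unitNormalHull (P i y) (y i)) Z a :=
    upperHemicontinuousWithinAt_unitNormalHull (lscOn_iff_lowerHemicontinuousOn.1 (hP i) a ha)
      (by fun_prop)
  have usc_pi : UpperHemicontinuousWithinAt
      (fun y ↦ Set.univ.pi fun i ↦ unitNormalHull (P i y) (y i)) Z a :=
    upperHemicontinuousWithinAt_univ_pi usc_factor fun i ↦ isCompact_unitNormalHull (P i a) (a i)
  let φ := PiLp.homeomorph 2 E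
  have usc_preimage := usc_pi.isInducing_comp φ.isInducing φ.isClosedEmbedding.isClosed_range
  simp only [Set.preimage, Set.mem_univ_pi] at usc_preimage
  exact usc_preimage

/-- If `Z ⊆ ℝ^n` is closed and each preference map `P_i` is l.s.c. on `Z`,
then the map `T(y) = ∏_i co(𝒩_i(y) ∩ S_i)`, with `𝒩_i(y) = (co(P_i(y)) − {y_i})°` and
`S_i` the unit sphere, is u.s.c. on `Z`. -/
theorem T_usc_of_lsc_preferences (N : ℕ) (hN : 1 ≤ N) (d : Fin N → ℕ)
    (Z : Set (Strat N d)) (hZclosed : IsClosed Z)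
    (P : ∀ i : Fin N, Strat N d → Set (Vec (d i)))
    (hPlsc : ∀ i, LscOn (P i) Z)
    (T : Strat N d → Set (Strat N d))
    (hT : ∀ y : Strat N d, T y = {v : Strat N d | ∀ i : Fin N,
      v i ∈ convexHull ℝ
        ({w : Vec (d i) | ∀ z ∈ convexHull ℝ (P i y), ⟪w, z - y i⟫ ≤ 0}
          ∩ Metric.sphere (0 : Vec (d i)) 1)}) :
    UscOn T Z := by
  rw [funext hT]
  exact T_usc_of_lsc_preferences_general hPlsc
end

section
/- Let X ⊆ ℝ^n be nonempty, closed and convex, T : ℝ^n ⇉ ℝ^n a set-valued map and K : X ⇉ ℝ^n a set-valued map. Then x̃ ∈ X is a projected solution of QVI(T,K) if and only if there exist ỹ ∈ K(x̃) and ỹ* ∈ T(ỹ) such that ⟨x̃ − ỹ, η − x̃⟩ + ⟨ỹ*, z − ỹ⟩ ≥ 0 for all η ∈ X and all z ∈ K(x̃). -/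
open scoped RealInnerProductSpace

/-!
Both terms of the inequality `⟨x̃ − ỹ, η − x̃⟩ + ⟨ỹ*, z − ỹ⟩ ≥ 0` can be made to vanish, by `η = x̃`
and by `z = ỹ`, so it holds for all `η` and `z` exactly when each term is nonnegative on its own.
Nonnegativity of the first term for all `η ∈ X` is the variational characterization of `x̃` as a
nearest point of the convex set `X` to `ỹ`.
-/

theorem forall_forall_add_nonneg_iff {α β M : Type*} [AddZeroClass M] [Preorder M]
    [AddLeftMono M] {s : Set α} {t : Set β} {f : α → M} {g : β → M} {a : α} {b : β}
    (ha : a ∈ s) (hb : b ∈ t) (hfa : f a = 0) (hgb : g b = 0) :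
    (∀ x ∈ s, ∀ y ∈ t, 0 ≤ f x + g y) ↔ (∀ x ∈ s, 0 ≤ f x) ∧ ∀ y ∈ t, 0 ≤ g y := by
  refine ⟨fun h => ⟨fun x hx => ?_, fun y hy => ?_⟩,
    fun ⟨hf, hg⟩ x hx y hy => add_nonneg (hf x hx) (hg y hy)⟩
  · simpa only [hgb, add_zero] using h x hx b hb
  · simpa only [hfa, zero_add] using h a ha y hy

section InnerProductSpace

variable {E : Type*} [NormedAddCommGroup E] [InnerProductSpace ℝ E] {X : Set E} {x : E}

theorem norm_sub_eq_iInf_iff_forall_inner_nonneg (hX : Convex ℝ X) (hx : x ∈ X) (y : E) :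
    (‖y - x‖ = ⨅ w : X, ‖y - (w : E)‖) ↔ ∀ η ∈ X, 0 ≤ ⟪x - y, η - x⟫ := by
  simp only [norm_eq_iInf_iff_real_inner_le_zero hX hx, ← neg_sub y x, inner_neg_left, neg_nonneg]

theorem projected_QVI_solution_iff_general (hX : Convex ℝ X) (T K : E → Set E) (hx : x ∈ X) :
    (∃ y ∈ K x, (‖y - x‖ = ⨅ w : X, ‖y - (w : E)‖) ∧ ∃ s ∈ T y, ∀ z ∈ K x, 0 ≤ ⟪s, z - y⟫)
    ↔ ∃ y ∈ K x, ∃ s ∈ T y, ∀ η ∈ X, ∀ z ∈ K x, 0 ≤ ⟪x - y, η - x⟫ + ⟪s, z - y⟫ := by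
  refine exists_congr fun y => and_congr_right fun hy => ?_
  have inner_add_nonneg_iff (s : E) :
      (∀ η ∈ X, ∀ z ∈ K x, 0 ≤ ⟪x - y, η - x⟫ + ⟪s, z - y⟫) ↔
        (‖y - x‖ = ⨅ w : X, ‖y - (w : E)‖) ∧ ∀ z ∈ K x, 0 ≤ ⟪s, z - y⟫ := by
    rw [norm_sub_eq_iInf_iff_forall_inner_nonneg hX hx]
    exact forall_forall_add_nonneg_iff hx hy (by rw [sub_self, inner_zero_right])
      (by rw [sub_self, inner_zero_right])
  simp only [inner_add_nonneg_iff, ← exists_and_left, and_left_comm]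

end InnerProductSpace

/-- For `X ⊆ ℝ^n` nonempty closed convex and set-valued maps
`T : ℝ^n ⇉ ℝ^n`, `K : X ⇉ ℝ^n`, a point `x̃ ∈ X` is a projected solution of
`QVI(T,K)` iff there are `ỹ ∈ K(x̃)` and `ỹ* ∈ T(ỹ)` with
`⟨x̃ − ỹ, η − x̃⟩ + ⟨ỹ*, z − ỹ⟩ ≥ 0` for all `η ∈ X` and `z ∈ K(x̃)`. -/
theorem projected_QVI_solution_iff (n : ℕ)
    (X : Set (Vec n)) (hXne : X.Nonempty) (hXclosed : IsClosed X) (hXconv : Convex ℝ X)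
    (T : Vec n → Set (Vec n)) (K : Vec n → Set (Vec n))
    (xt : Vec n) (hxt : xt ∈ X) :
    (∃ yt ∈ K xt,
        (‖yt - xt‖ = ⨅ w : X, ‖yt - (w : Vec n)‖) ∧
        ∃ ys ∈ T yt, ∀ z ∈ K xt, ⟪ys, z - yt⟫ ≥ 0)
    ↔ (∃ yt ∈ K xt, ∃ ys ∈ T yt,
        ∀ η ∈ X, ∀ z ∈ K xt, ⟪xt - yt, η - xt⟫ + ⟪ys, z - yt⟫ ≥ 0) :=
  projected_QVI_solution_iff_general hXconv T K hxt
end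

section
/- Assume for each player i: (a) X_i ⊆ ℝ^{n_i} is nonempty, compact and convex; (b) K_i : X ⇉ ℝ^{n_i} is a closed and lower semicontinuous set-valued map with nonempty convex values; (c) P_i : ℝ^n ⇉ ℝ^{n_i} is lower semicontinuous; (d) for every y ∈ ∏_i co(cl(K_i(X))), the set P_i(y) is open and y_i ∉ co(P_i(y)). If, in addition, K(X) = ⋃_{x∈X} ∏_i K_i(x) is relatively compact, then the generalized Nash game Γ = (X_i,K_i,P_i)_i admits a projected solution. -/
open scoped RealInnerProductSpace

/-!
Let `p` be the metric projection onto `X`. If `y` is a Shafer–Sonnenschein equilibrium of the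
abstract economy with constraint maps `K i ∘ p` on `∏ i, co (cl (K i X))`, then `p y` is a projected
solution. Replacing `P i` by `co (P i)` makes the preferences convex-valued, and an open
convex-valued lower semicontinuous map has an open graph. After an `ε`-enlargement of the
constraints all maps have open lower sections, so continuous selections and Brouwer's theorem give
an approximate equilibrium, and compactness lets `ε → 0`.

Brouwer's theorem comes from the Milnor–Rogers argument: if `F` fixes the boundary of a convex body,
the volume integral of `det (1 + t • (F' - 1))` is a polynomial in `t` that is constant for small
`t`, so its value at `t = 1` is the volume of the body; for a retraction of a ball onto its sphere
this value is `0`.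
-/

section

open Filter MeasureTheory Metric Polynomial Set Topology

section MetricProjection

variable {E : Type*} [NormedAddCommGroup E] [InnerProductSpace ℝ E]

/-- `p` sends every point of the space to a nearest point of `X`. The least distance is written as
an infimum over the subtype `X`, as in Mathlib's `exists_norm_eq_iInf_of_complete_convex`. -/
def IsMetricProjection (X : Set E) (p : E → E) : Prop :=
  ∀ y, p y ∈ X ∧ ‖y - p y‖ = ⨅ w : X, ‖y - (w : E)‖

theorem exists_isMetricProjection {X : Set E} (hne : X.Nonempty) (hcomplete : IsComplete X)
    (hconv : Convex ℝ X) : ∃ p, IsMetricProjection X p :=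
  Classical.skolem.1 (exists_norm_eq_iInf_of_complete_convex hne hcomplete hconv)

namespace IsMetricProjection

variable {X : Set E} {p : E → E}

theorem inner_le_zero (hp : IsMetricProjection X p) (hconv : Convex ℝ X) (y : E) {w : E}
    (hw : w ∈ X) : ⟪y - p y, w - p y⟫ ≤ 0 :=
  (norm_eq_iInf_iff_real_inner_le_zero hconv (hp y).1).1 (hp y).2 w hw

theorem lipschitzWith (hp : IsMetricProjection X p) (hconv : Convex ℝ X) : LipschitzWith 1 p := by
  refine LipschitzWith.of_dist_le_mul fun x y => ?_
  simp only [NNReal.coe_one, one_mul, dist_eq_norm]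
  have hx := hp.inner_le_zero hconv x (hp y).1
  have hy := hp.inner_le_zero hconv y (hp x).1
  have hmono : ‖p x - p y‖ ^ 2 ≤ ⟪x - y, p x - p y⟫ := by
    rw [← real_inner_self_eq_norm_sq]
    simp only [inner_sub_left, inner_sub_right] at hx hy ⊢
    linarith
  have hcauchy := real_inner_le_norm (x - y) (p x - p y)
  by_contra! hlt
  nlinarith [norm_nonneg (x - y)]

theorem continuous (hp : IsMetricProjection X p) (hconv : Convex ℝ X) : Continuous p :=
  (hp.lipschitzWith hconv).continuous

theorem apply_of_mem (hp : IsMetricProjection X p) (hconv : Convex ℝ X) {y : E} (hy : y ∈ X) :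
    p y = y := by
  have hinner := hp.inner_le_zero hconv y hy
  rw [real_inner_self_nonpos, sub_eq_zero] at hinner
  exact hinner.symm

theorem mem_frontier (hp : IsMetricProjection X p) (hconv : Convex ℝ X) {y : E} (hy : y ∉ X) :
    p y ∈ frontier X := by
  refine ⟨subset_closure (hp y).1, fun hint => hy ?_⟩
  have hline : Filter.Tendsto (fun s : ℝ => p y + s • (y - p y)) (𝓝[>] 0) (𝓝 (p y)) := by
    have : Continuous fun s : ℝ => p y + s • (y - p y) := by fun_prop
    simpa using (this.tendsto 0).mono_left nhdsWithin_le_nhds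
  obtain ⟨s, hs, hs0⟩ :=
    ((hline.eventually (mem_interior_iff_mem_nhds.1 hint)).and self_mem_nhdsWithin).exists
  have hinner := hp.inner_le_zero hconv y hs
  rw [add_sub_cancel_left, inner_smul_right] at hinner
  have hzero := nonpos_of_mul_nonpos_right hinner hs0
  rw [real_inner_self_nonpos, sub_eq_zero] at hzero
  exact hzero ▸ (hp y).1

end IsMetricProjection

end MetricProjection

theorem bijective_add_of_contractingWith {E : Type*} [NormedAddCommGroup E] [CompleteSpace E]
    {c : NNReal} {h : E → E} (hh : ContractingWith c h) : Function.Bijective fun x => x + h x := by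
  constructor
  · have hid : AntilipschitzWith 1 (id : E → E) := AntilipschitzWith.id
    exact (hid.add_lipschitzWith hh.2 (by simpa using hh.1)).injective
  · intro y
    have hy : ContractingWith c fun x => y - h x :=
      ⟨hh.1, LipschitzWith.of_dist_le_mul fun x z => by
        simpa only [dist_sub_left] using hh.2.dist_le_mul x z⟩
    exact ⟨_, (eq_sub_iff_add_eq.1 hy.fixedPoint_isFixedPt.symm)⟩

theorem bijOn_add_of_lipschitzOnWith {E : Type*} [NormedAddCommGroup E] [InnerProductSpace ℝ E]
    [CompleteSpace E] {D : Set E} (hclosed : IsClosed D) (hconv : Convex ℝ D) {c : NNReal}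
    (hc : c < 1) {h : E → E} (hlip : LipschitzOnWith c h D)
    (hfrontier : ∀ x ∈ frontier D, h x = 0) :
    BijOn (fun x => x + h x) D D := by
  obtain rfl | hne := D.eq_empty_or_nonempty
  · exact bijOn_empty _
  obtain ⟨p, hp⟩ := exists_isMetricProjection hne hclosed.isComplete hconv
  have hbij : Function.Bijective fun x => x + h (p x) := by
    refine bijective_add_of_contractingWith ⟨hc, ?_⟩
    have hcomp := hlip.comp (hp.lipschitzWith hconv).lipschitzOnWith (s := univ) fun x _ => (hp x).1
    rwa [mul_one, lipschitzOnWith_univ] at hcomp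
  have hoff : EqOn (fun x => x + h (p x)) id Dᶜ := fun x hx => by
    simp [hfrontier _ (hp.mem_frontier hconv hx)]
  have hcompl : BijOn (fun x => x + h (p x)) Dᶜ Dᶜ := (bijOn_id _).congr hoff.symm
  have hon : EqOn (fun x => x + h (p x)) (fun x => x + h x) D := fun x hx => by
    simp [hp.apply_of_mem hconv hx]
  have himage : (fun x => x + h (p x)) '' D = D :=
    compl_injective ((image_compl_eq hbij).symm.trans hcompl.image_eq)
  have hbijOn := (hbij.injective.injOn (s := D)).bijOn_image
  rw [himage] at hbijOn
  exact hbijOn.congr hon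

section Volume

variable {E : Type*} [NormedAddCommGroup E] [NormedSpace ℝ E] [FiniteDimensional ℝ E]

theorem det_one_add_pos_of_norm_lt_one {A : E →L[ℝ] E} (hA : ‖A‖ < 1) : 0 < (1 + A).det := by
  have hdet_ne : ∀ B ∈ ball (0 : E →L[ℝ] E) 1, (1 + B).det ≠ 0 := fun B hB => by
    have : CompleteSpace E := FiniteDimensional.complete ℝ E
    have hunit : IsUnit (1 - -B) := isUnit_one_sub_of_norm_lt_one (by simpa using hB)
    rw [sub_neg_eq_add] at hunit
    exact ((LinearMap.isUnit_iff_isUnit_det _).1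
      (hunit.map (ContinuousLinearMap.toLinearMapRingHom (R₁ := ℝ) (M₁ := E)))).ne_zero
  by_contra! hneg
  obtain ⟨B, hB, hzero⟩ := (convex_ball (0 : E →L[ℝ] E) 1).isPreconnected.intermediate_value
    (f := fun B => (1 + B).det) (mem_ball_zero_iff.2 hA) (mem_ball_self one_pos)
    (ContinuousLinearMap.continuous_det.comp_continuousOn (by fun_prop))
    ⟨hneg, by simp [ContinuousLinearMap.det]⟩
  exact hdet_ne B hB hzero

theorem exists_polynomial_eval_eq_det_one_add_smul (A : E →L[ℝ] E) :
    ∃ q : ℝ[X], q.natDegree ≤ Module.finrank ℝ E ∧ ∀ t, q.eval t = (1 + t • A).det := by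
  let b := Module.finBasis ℝ E
  let M := LinearMap.toMatrix b b (A : E →ₗ[ℝ] E)
  refine ⟨_, (Polynomial.natDegree_det_X_add_C_le M 1).trans (by simp), fun t => ?_⟩
  have hdet : (1 + t • A).det = LinearMap.det (1 + t • (A : E →ₗ[ℝ] E)) := rfl
  rw [hdet, ← LinearMap.det_toMatrix b, ← Polynomial.coe_evalRingHom, RingHom.map_det]
  congr 1
  ext i j
  simp [M, Matrix.one_apply, add_comm, apply_ite, mul_comm t]

theorem exists_polynomial_eval_eq_integral {α 𝕜 : Type*} [MeasurableSpace α] {μ : Measure α}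
    [RCLike 𝕜] {n : ℕ} {q : α → 𝕜[X]} (hdeg : ∀ x, (q x).natDegree ≤ n)
    (hint : ∀ t, Integrable (fun x => (q x).eval t) μ) :
    ∃ Q : 𝕜[X], ∀ t, Q.eval t = ∫ x, (q x).eval t ∂μ := by
  let s := Finset.range (n + 1)
  let v : ℕ → 𝕜 := fun j => j
  have hinterp : ∀ x t,
      (q x).eval t = ∑ j ∈ s, (q x).eval (v j) * (Lagrange.basis s v j).eval t := by
    intro x t
    conv_lhs => rw [Lagrange.eq_interpolate (s := s) (v := v) Nat.cast_injective.injOn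
      (f := q x) (degree_le_natDegree.trans_lt
        (by simpa [s] using mod_cast Nat.lt_succ_of_le (hdeg x)))]
    simp [Lagrange.interpolate_apply, eval_finsetSum]
  refine ⟨∑ j ∈ s, C (∫ x, (q x).eval (v j) ∂μ) * Lagrange.basis s v j, fun t => ?_⟩
  simp_rw [hinterp _ t]
  rw [integral_finsetSum _ fun j _ => (hint (v j)).mul_const _]
  simp [eval_finsetSum, integral_mul_const]

end Volume

theorem det_fderiv_eq_zero_of_eventually_norm_eq {E : Type*} [NormedAddCommGroup E]
    [InnerProductSpace ℝ E] [FiniteDimensional ℝ E] {f : E → E} {x : E} {r : ℝ} (hr : r ≠ 0)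
    (hf : DifferentiableAt ℝ f x) (hnorm : ∀ᶠ y in 𝓝 x, ‖f y‖ = r) : (fderiv ℝ f x).det = 0 := by
  have hconst : HasFDerivAt (fun y => ‖f y‖ ^ 2) (0 : E →L[ℝ] ℝ) x :=
    (hasFDerivAt_const (r ^ 2) x).congr_of_eventuallyEq (hnorm.mono fun y hy => by simp [hy])
  have horth : ∀ w, ⟪f x, fderiv ℝ f x w⟫ = 0 := fun w => by
    simpa using DFunLike.congr_fun (hf.hasFDerivAt.norm_sq.unique hconst) w
  by_contra hdet
  obtain ⟨w, hw⟩ : ∃ w, fderiv ℝ f x w = f x :=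
    ((LinearMap.equivOfDetNeZero _ hdet).surjective (f x))
  have hzero := horth w
  rw [hw, inner_self_eq_zero, ← norm_eq_zero, hnorm.self_of_nhds] at hzero
  exact hr hzero

section VolumePreservation

variable {E : Type*} [NormedAddCommGroup E] [InnerProductSpace ℝ E] [FiniteDimensional ℝ E]
  [MeasurableSpace E] [BorelSpace E] {μ : Measure E} [μ.IsAddHaarMeasure]

theorem setIntegral_det_one_add_eq_measureReal_of_norm_le {D : Set E} (hclosed : IsClosed D)
    (hconv : Convex ℝ D) {h : E → E} {A : E → E →L[ℝ] E}
    (hderiv : ∀ x ∈ D, HasFDerivWithinAt h (A x) D x) {c : ℝ} (hc : c < 1)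
    (hbound : ∀ x ∈ D, ‖A x‖ ≤ c) (hfrontier : ∀ x ∈ frontier D, h x = 0) :
    ∫ x in D, (1 + A x).det ∂μ = μ.real D := by
  have hlip := hconv.lipschitzOnWith_of_nnnorm_hasFDerivWithin_le hderiv fun x hx =>
    NNReal.le_toNNReal_of_coe_le (hbound x hx)
  have hbij := bijOn_add_of_lipschitzOnWith hclosed hconv (Real.toNNReal_lt_one.2 hc) hlip hfrontier
  have hpos : ∀ x ∈ D, 0 < (1 + A x).det := fun x hx =>
    det_one_add_pos_of_norm_lt_one ((hbound x hx).trans_lt hc)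
  have hchange := integral_image_eq_integral_abs_det_fderiv_smul μ hclosed.measurableSet
    (fun x hx => (hasFDerivWithinAt_id x D).add (hderiv x hx)) hbij.injOn fun _ => (1 : ℝ)
  calc ∫ x in D, (1 + A x).det ∂μ
      = ∫ x in D, |(1 + A x).det| • (1 : ℝ) ∂μ :=
        setIntegral_congr_fun hclosed.measurableSet fun x hx => by simp [abs_of_pos (hpos x hx)]
    _ = ∫ _ in (fun x => x + h x) '' D, (1 : ℝ) ∂μ := hchange.symm
    _ = μ.real D := by simp [hbij.image_eq]

/- The integral of `det (1 + t • (F' - 1))` is a polynomial in `t`; it equals the volume for small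
`t > 0`, because `x + t • (F x - x)` then maps `D` bijectively onto itself, and hence also at
`t = 1`. -/
theorem setIntegral_det_fderiv_eq_measureReal {D : Set E} (hD : IsCompact D) (hconv : Convex ℝ D)
    {F : E → E} (hF : ∀ x ∈ D, ContDiffAt ℝ 1 F x) (hfrontier : ∀ x ∈ frontier D, F x = x) :
    ∫ x in D, (fderiv ℝ F x).det ∂μ = μ.real D := by
  let A : E → E →L[ℝ] E := fun x => fderiv ℝ F x - 1
  have hA : ContinuousOn A D := fun x hx =>
    (((hF x hx).continuousAt_fderiv one_ne_zero).sub continuousAt_const).continuousWithinAt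
  have hderiv : ∀ t : ℝ, ∀ x ∈ D, HasFDerivWithinAt (fun x => t • (F x - x)) (t • A x) D x :=
    fun t x hx => ((((hF x hx).differentiableAt one_ne_zero).hasFDerivAt.sub
      (hasFDerivAt_id x)).const_smul t).hasFDerivWithinAt
  choose q hq_deg hq using fun x => exists_polynomial_eval_eq_det_one_add_smul (A x)
  obtain ⟨Q, hQ⟩ := exists_polynomial_eval_eq_integral (μ := μ.restrict D) hq_deg fun t => by
    simp_rw [hq]
    exact (ContinuousLinearMap.continuous_det.comp_continuousOn
      (continuousOn_const.add (hA.const_smul t))).integrableOn_compact hD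
  simp_rw [hq] at hQ
  obtain ⟨c, hc, hAc⟩ := (hD.image_of_continuousOn hA).isBounded.exists_pos_norm_le
  have hsmall : ∀ t ∈ Ioo (0 : ℝ) c⁻¹, Q.eval t = (C (μ.real D)).eval t := fun t ht => by
    have htc : t * c < 1 := by simpa using (lt_div_iff₀ hc).1 (by simpa using ht.2)
    rw [hQ, eval_C]
    refine setIntegral_det_one_add_eq_measureReal_of_norm_le hD.isClosed hconv (hderiv t)
      htc (fun x hx => ?_) fun x hx => by simp [hfrontier x hx]
    rw [norm_smul, Real.norm_of_nonneg ht.1.le]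
    exact mul_le_mul_of_nonneg_left (hAc _ (mem_image_of_mem A hx)) ht.1.le
  have hconst : Q = C (μ.real D) :=
    eq_of_infinite_eval_eq _ _ ((Ioo_infinite (inv_pos.2 hc)).mono hsmall)
  simpa [A, hconst] using (hQ 1).symm

end VolumePreservation

section Brouwer

variable {E : Type*} [NormedAddCommGroup E] [InnerProductSpace ℝ E] [FiniteDimensional ℝ E]

theorem exists_mem_sphere_apply_ne_of_norm_eq {f : E → E} {r : ℝ} (hr : 0 < r)
    (hf : ∀ x ∈ closedBall 0 r, ContDiffAt ℝ 1 f x) (hnorm : ∀ x ∈ closedBall 0 r, ‖f x‖ = r) :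
    ∃ x ∈ sphere 0 r, f x ≠ x := by
  by_contra! hid
  borelize E
  let μ : Measure E := Measure.addHaar
  have hvolume : ∫ x in closedBall 0 r, (fderiv ℝ f x).det ∂μ = μ.real (closedBall 0 r) :=
    setIntegral_det_fderiv_eq_measureReal (isCompact_closedBall 0 r) (convex_closedBall 0 r) hf
      fun x hx => hid x (frontier_closedBall_subset_sphere hx)
  have hdet : ∫ x in ball 0 r, (fderiv ℝ f x).det ∂μ = 0 :=
    setIntegral_eq_zero_of_forall_eq_zero fun x hx =>
      det_fderiv_eq_zero_of_eventually_norm_eq hr.ne'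
        ((hf x (ball_subset_closedBall hx)).differentiableAt one_ne_zero)
        (mem_of_superset (isOpen_ball.mem_nhds hx) fun y hy => hnorm y (ball_subset_closedBall hy))
  have hae : (ball 0 r : Set E) =ᵐ[μ] closedBall 0 r :=
    interior_closedBall (0 : E) hr.ne' ▸
      interior_ae_eq_of_null_frontier ((convex_closedBall 0 r).addHaar_frontier μ)
  rw [setIntegral_congr_set hae, hvolume] at hdet
  have hpos : 0 < μ.real (closedBall 0 r) :=
    ENNReal.toReal_pos (measure_closedBall_pos μ 0 hr).ne' measure_closedBall_lt_top.ne
  exact hpos.ne' hdet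

theorem exists_forall_add_smul_ne_zero {u : E → E} {r : ℝ} (hr : 0 < r) (hu : Continuous u)
    (hne : ∀ x ∈ closedBall 0 r, u x ≠ 0) (hinner : ∀ x ∈ sphere 0 r, 0 < ⟪x, u x⟫) :
    ∃ k : ℝ, ∀ x ∈ closedBall 0 r, x + (k * (r ^ 2 - ‖x‖ ^ 2)) • u x ≠ 0 := by
  have hg : ∀ x ∈ closedBall 0 r ∩ {x | ⟪x, u x⟫ ≤ 0}, 0 < (r ^ 2 - ‖x‖ ^ 2) * ‖u x‖ := by
    rintro x ⟨hx, hxu⟩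
    have hlt : ‖x‖ < r := (mem_closedBall_zero_iff.1 hx).lt_of_ne fun h =>
      hxu.not_gt (hinner x (mem_sphere_zero_iff_norm.2 h))
    exact mul_pos (by nlinarith [norm_nonneg x]) (norm_pos_iff.2 (hne x hx))
  obtain ⟨m, hm, hmg⟩ := ((isCompact_closedBall (0 : E) r).inter_right
    (isClosed_le (continuous_id.inner hu) continuous_const)).exists_forall_le'
    (by fun_prop) hg
  refine ⟨(r + 1) / m, fun x hx hzero => ?_⟩
  have hx' := mem_closedBall_zero_iff.1 hx
  have hcoef : 0 ≤ (r + 1) / m * (r ^ 2 - ‖x‖ ^ 2) := by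
    have : 0 ≤ r ^ 2 - ‖x‖ ^ 2 := by nlinarith [norm_nonneg x]
    positivity
  rcases le_or_gt ⟪x, u x⟫ 0 with hxu | hxu
  · have hnorm : ‖x‖ = (r + 1) / m * ((r ^ 2 - ‖x‖ ^ 2) * ‖u x‖) := by
      conv_lhs => rw [eq_neg_of_add_eq_zero_left hzero]
      rw [norm_neg, norm_smul, Real.norm_of_nonneg hcoef, mul_assoc]
    have hlarge : (r + 1) / m * m ≤ ‖x‖ := hnorm ▸ by
      have := hmg x ⟨hx, hxu⟩
      gcongr
    rw [div_mul_cancel₀ _ hm.ne'] at hlarge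
    linarith
  · have hinner_zero : ‖x‖ ^ 2 + (r + 1) / m * (r ^ 2 - ‖x‖ ^ 2) * ⟪x, u x⟫ = 0 := by
      simpa [inner_add_right, inner_smul_right] using congrArg (inner ℝ x) hzero
    have hx_zero : x = 0 := norm_eq_zero.1 (by nlinarith [norm_nonneg x])
    simp [hx_zero] at hxu

/- Without a zero, `x + k (r² - ‖x‖²) u x` does not vanish on the ball for large `k`, so its
normalization would be a retraction onto the sphere. -/
theorem exists_eq_zero_of_contDiff_of_inner_pos {u : E → E} {r : ℝ} (hr : 0 < r)
    (hu : ContDiff ℝ 1 u) (hinner : ∀ x ∈ sphere 0 r, 0 < ⟪x, u x⟫) :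
    ∃ x ∈ closedBall 0 r, u x = 0 := by
  by_contra! hne
  obtain ⟨k, hF_ne⟩ := exists_forall_add_smul_ne_zero hr hu.continuous hne hinner
  set F : E → E := fun x => x + (k * (r ^ 2 - ‖x‖ ^ 2)) • u x
  have hF : ContDiff ℝ 1 F := by
    have := contDiff_norm_sq (E := E) ℝ (n := 1)
    fun_prop
  obtain ⟨x, hx, hne⟩ := exists_mem_sphere_apply_ne_of_norm_eq (f := fun x => (r / ‖F x‖) • F x) hr
    (fun x hx => (contDiffAt_const.div (hF.contDiffAt.norm ℝ (hF_ne x hx))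
      (norm_ne_zero_iff.2 (hF_ne x hx))).smul hF.contDiffAt)
    fun x hx => by
      rw [norm_smul, norm_div, norm_norm, Real.norm_of_nonneg hr.le,
        div_mul_cancel₀ _ (norm_ne_zero_iff.2 (hF_ne x hx))]
  have hx' := mem_sphere_zero_iff_norm.1 hx
  exact hne (by simp [F, hx', hr.ne'])

theorem exists_eq_zero_of_continuous_of_inner_nonneg {u : E → E} {r : ℝ} (hr : 0 < r)
    (hu : Continuous u) (hinner : ∀ x ∈ sphere 0 r, 0 ≤ ⟪x, u x⟫) :
    ∃ x ∈ closedBall 0 r, u x = 0 := by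
  by_contra! hne
  obtain ⟨δ, hδ, hδu⟩ := (isCompact_closedBall (0 : E) r).exists_forall_le'
    hu.norm.continuousOn fun x hx => norm_pos_iff.2 (hne x hx)
  obtain ⟨w, hw, hwu, -⟩ := hu.exists_contDiff_approx 1 (ε := fun _ => δ / 2) continuous_const
    fun _ => half_pos hδ
  simp only [dist_eq_norm] at hwu
  have hv : ∀ x ∈ sphere (0 : E) r, 0 < ⟪x, w x + (δ / (2 * r)) • x⟫ := fun x hx => by
    have hxr := mem_sphere_zero_iff_norm.1 hx
    have hcauchy := neg_le_of_abs_le (abs_real_inner_le_norm x (w x - u x))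
    have hlt := mul_lt_mul_of_pos_left (hwu x) hr
    have hsq : δ / (2 * r) * r ^ 2 = r * (δ / 2) := by field_simp
    have hxu := hinner x hx
    rw [inner_sub_right, hxr] at hcauchy
    rw [inner_add_right, inner_smul_right, real_inner_self_eq_norm_sq, hxr, hsq]
    linarith
  obtain ⟨x, hx, hzero⟩ := exists_eq_zero_of_contDiff_of_inner_pos hr
    (hw.add (contDiff_const.smul contDiff_id)) hv
  have hlinear : ‖(δ / (2 * r)) • x‖ ≤ δ / 2 := by
    rw [norm_smul, Real.norm_of_nonneg (by positivity)]
    calc δ / (2 * r) * ‖x‖ ≤ δ / (2 * r) * r := by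
          have := mem_closedBall_zero_iff.1 hx
          gcongr
      _ = δ / 2 := by field_simp
  have hu_eq : u x = -(w x - u x) - (δ / (2 * r)) • x := by
    have hw_eq : w x = -((δ / (2 * r)) • x) := eq_neg_of_add_eq_zero_left hzero
    rw [hw_eq]
    abel
  have htriangle := norm_sub_le (-(w x - u x)) ((δ / (2 * r)) • x)
  rw [← hu_eq, norm_neg] at htriangle
  linarith [hδu x hx, hwu x]

theorem exists_isFixedPt_of_isCompact_convex_of_innerProductSpace {K : Set E} (hK : IsCompact K)
    (hconv : Convex ℝ K) (hne : K.Nonempty) {g : K → K} (hg : Continuous g) :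
    ∃ x, Function.IsFixedPt g x := by
  obtain ⟨p, hp⟩ := exists_isMetricProjection hne hK.isComplete hconv
  obtain ⟨r, hr, hKr⟩ := hK.isBounded.exists_pos_norm_le
  let u : E → E := fun x => x - g ⟨p x, (hp x).1⟩
  have hu : Continuous u := continuous_id.sub <| continuous_subtype_val.comp <|
    hg.comp <| (hp.continuous hconv).subtype_mk fun x => (hp x).1
  obtain ⟨x, -, hx⟩ := exists_eq_zero_of_continuous_of_inner_nonneg hr hu fun x hx => by
    have hxr := mem_sphere_zero_iff_norm.1 hx
    have hcauchy := real_inner_le_norm x (g ⟨p x, (hp x).1⟩)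
    have hgr := hKr _ (g ⟨p x, (hp x).1⟩).2
    simp only [u]
    rw [inner_sub_right, real_inner_self_eq_norm_sq]
    nlinarith
  have hgx : (g ⟨p x, (hp x).1⟩ : E) = x := (sub_eq_zero.1 hx).symm
  have hxK : x ∈ K := hgx ▸ (g ⟨p x, (hp x).1⟩).2
  refine ⟨⟨x, hxK⟩, Subtype.ext ?_⟩
  simpa only [hp.apply_of_mem hconv hxK] using hgx

end Brouwer

theorem exists_isFixedPt_of_isCompact_convex {E : Type*} [AddCommGroup E] [Module ℝ E]
    [TopologicalSpace E] [IsTopologicalAddGroup E] [ContinuousSMul ℝ E] [T2Space E]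
    [FiniteDimensional ℝ E] {K : Set E} (hK : IsCompact K) (hconv : Convex ℝ K)
    (hne : K.Nonempty) {g : K → K} (hg : Continuous g) : ∃ x, Function.IsFixedPt g x := by
  let e := toEuclidean (E := E)
  let φ : K ≃ₜ e '' K := e.toHomeomorph.image K
  obtain ⟨x, hx⟩ := exists_isFixedPt_of_isCompact_convex_of_innerProductSpace
    (hK.image e.continuous) (hconv.is_linear_image e.toLinearEquiv.toLinearMap.isLinear)
    (hne.image e) (g := φ ∘ g ∘ φ.symm) (by fun_prop)
  exact ⟨φ.symm x, φ.toEquiv.eq_symm_apply.2 hx⟩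

section ConvexHull

variable {E : Type*} [AddCommGroup E] [Module ℝ E]

theorem convexHull_eq_biUnion_image_stdSimplex [FiniteDimensional ℝ E] (s : Set E) :
    convexHull ℝ s = ⋃ k ∈ Finset.range (Module.finrank ℝ E + 2),
      (fun q : (Fin k → ℝ) × (Fin k → E) => ∑ i, q.1 i • q.2 i) ''
        (stdSimplex ℝ (Fin k) ×ˢ univ.pi fun _ => s) := by
  refine Subset.antisymm (fun x hx => ?_) (iUnion₂_subset fun k _ => ?_)
  · obtain ⟨ι, _, z, w, hz, hind, hw, hw_sum, rfl⟩ := eq_pos_convex_span_of_mem_convexHull hx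
    have hcard : Fintype.card ι ≤ Module.finrank ℝ E + 1 :=
      hind.card_le_finrank_succ.trans (Nat.succ_le_succ (Submodule.finrank_le _))
    let e := Fintype.equivFin ι
    refine mem_biUnion (Finset.mem_range.2 (Nat.lt_succ_of_le hcard))
      ⟨(w ∘ e.symm, z ∘ e.symm), ⟨⟨fun i => (hw _).le, ?_⟩, fun i _ => hz ⟨_, rfl⟩⟩, ?_⟩
    · exact (Equiv.sum_comp e.symm w).trans hw_sum
    · exact Equiv.sum_comp e.symm fun i => w i • z i
  · rintro _ ⟨⟨w, z⟩, ⟨hw, hz⟩, rfl⟩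
    exact (convex_convexHull ℝ s).sum_mem (fun i _ => hw.1 i) hw.2
      fun i _ => subset_convexHull ℝ s (hz i (mem_univ i))

theorem isCompact_convexHull_of_finiteDimensional [TopologicalSpace E] [ContinuousAdd E]
    [ContinuousSMul ℝ E] [FiniteDimensional ℝ E] {s : Set E} (hs : IsCompact s) :
    IsCompact (convexHull ℝ s) := by
  rw [convexHull_eq_biUnion_image_stdSimplex]
  exact (Finset.range _).isCompact_biUnion fun k _ =>
    ((isCompact_stdSimplex ℝ (Fin k)).prod (isCompact_univ_pi fun _ => hs)).image (by fun_prop)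

theorem notMem_convexHull_iUnion_update_image {ι : Type*} [DecidableEq ι] {F : ι → Type*}
    [∀ i, AddCommGroup (F i)] [∀ i, Module ℝ (F i)] {y : ∀ i, F i} {Φ : ∀ i, Set (F i)}
    (hconv : ∀ i, Convex ℝ (Φ i)) (hy : ∀ i, y i ∉ Φ i) :
    y ∉ convexHull ℝ (⋃ i, Function.update y i '' Φ i) := by
  intro hmem
  obtain ⟨κ, _, w, x, hw, hw_sum, hx, hsum⟩ := mem_convexHull_iff_exists_fintype.1 hmem
  simp only [mem_iUnion, mem_image] at hx
  choose i z hz hxz using hx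
  obtain ⟨k₀, -, hk₀⟩ := Finset.exists_ne_zero_of_sum_ne_zero (hw_sum.trans_ne one_ne_zero)
  set j := i k₀
  let S : Finset κ := {k | i k = j}
  have hpos : 0 < ∑ k ∈ S, w k :=
    Finset.sum_pos' (fun k _ => hw k) ⟨k₀, by simp [S, j], (hw k₀).lt_of_ne' hk₀⟩
  -- Only the points obtained by changing the `j`-th coordinate contribute to that coordinate.
  have hzero : ∑ k ∈ S, w k • (x k j - y j) = 0 := by
    calc ∑ k ∈ S, w k • (x k j - y j) = ∑ k, w k • (x k j - y j) := by
          refine Finset.sum_subset (Finset.subset_univ _) fun k _ hk => ?_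
          have hkj : j ≠ i k := fun h => hk (by simp [S, h])
          rw [← hxz k, Function.update_of_ne hkj, sub_self, smul_zero]
      _ = 0 := by
          simp only [smul_sub, Finset.sum_sub_distrib, ← Finset.sum_smul, hw_sum, one_smul,
            ← hsum, Finset.sum_apply, Pi.smul_apply, sub_self]
  have hcenter : S.centerMass w (fun k => x k j) = y j := by
    simp only [smul_sub, Finset.sum_sub_distrib, ← Finset.sum_smul, sub_eq_zero] at hzero
    rw [Finset.centerMass, hzero, inv_smul_smul₀ hpos.ne']
  refine hy j (hcenter ▸ (hconv j).centerMass_mem (fun k _ => hw k) hpos fun k hk => ?_)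
  have hkj : i k = j := by simpa [S] using hk
  rw [← hxz k, ← hkj, Function.update_self]
  exact hz k

end ConvexHull

theorem mem_closure_of_closedBall_subset_thickening {E : Type*} [NormedAddCommGroup E]
    [NormedSpace ℝ E] {T : Set E} (hconv : Convex ℝ T) {z : E} {δ : ℝ} (hδ : 0 < δ)
    (hsub : closedBall z δ ⊆ thickening δ T) : z ∈ closure T := by
  by_contra hz
  obtain ⟨f, u, hfz, hfT⟩ := geometric_hahn_banach_point_closed hconv.closure isClosed_closure hz
  have hlower : ∀ v, ‖v‖ ≤ 1 → u - ‖f‖ * δ ≤ f z - δ * f v := fun v hv => by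
    have hmem : z - δ • v ∈ closedBall z δ := by
      simpa [norm_smul, abs_of_pos hδ] using mul_le_of_le_one_right hδ.le hv
    obtain ⟨t, ht, hdist⟩ := mem_thickening_iff.1 (hsub hmem)
    rw [dist_comm, dist_eq_norm] at hdist
    have hopNorm := (le_abs_self _).trans (f.le_opNorm_of_le hdist.le)
    simp only [map_sub, map_smul, smul_eq_mul] at hopNorm
    linarith [hfT t (subset_closure ht)]
  obtain ⟨v, hv, hfv⟩ := f.exists_lt_apply_of_lt_opNorm (r := ‖f‖ - (u - f z) / δ)
    (sub_lt_self _ (div_pos (sub_pos.2 hfz) hδ))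
  have hupper : δ * |f v| ≤ ‖f‖ * δ - (u - f z) := by
    rcases abs_choice (f v) with h | h <;> rw [h]
    · linarith [hlower v hv.le]
    · have := hlower (-v) (by simpa using hv.le)
      simp only [map_neg] at this
      linarith
  have hstrict := mul_lt_mul_of_pos_left hfv hδ
  rw [mul_sub, mul_div_cancel₀ _ hδ.ne', Real.norm_eq_abs] at hstrict
  linarith

section Hemicontinuity

variable {α E : Type*} [TopologicalSpace α]

theorem LscOn.lowerHemicontinuousOn [TopologicalSpace E] {F : α → Set E} {A : Set α}
    (hF : LscOn F A) : LowerHemicontinuousOn F A := fun a ha => by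
  refine lowerHemicontinuousWithinAt_iff.2 fun V hV hne => ?_
  obtain ⟨U, hU, haU, hUV⟩ := hF a ha V hV hne
  filter_upwards [self_mem_nhdsWithin, mem_nhdsWithin_of_mem_nhds (hU.mem_nhds haU)] with a' hA hUa'
  exact hUV a' ⟨hUa', hA⟩

theorem LscOn.lowerHemicontinuous_comp {β : Type*} [TopologicalSpace β] [TopologicalSpace E]
    {F : α → Set E} {A : Set α} (hF : LscOn F A) {g : β → α} (hg : Continuous g)
    (hgA : ∀ b, g b ∈ A) : LowerHemicontinuous fun b => F (g b) :=
  lowerHemicontinuousOn_univ_iff.1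
    (hF.lowerHemicontinuousOn.comp hg.continuousOn fun b _ => hgA b)

theorem lowerHemicontinuous_convexHull [AddCommGroup E] [Module ℝ E] [TopologicalSpace E]
    [ContinuousAdd E] [ContinuousSMul ℝ E] {F : α → Set E} (hF : LowerHemicontinuous F) :
    LowerHemicontinuous fun a => convexHull ℝ (F a) := fun a => by
  refine lowerHemicontinuousAt_iff.2 fun V hV => ?_
  rintro ⟨x, hx, hxV⟩
  obtain ⟨κ, _, w, z, hw, hw_sum, hz, rfl⟩ := mem_convexHull_iff_exists_fintype.1 hx
  have hopen : IsOpen ((fun z : κ → E => ∑ k, w k • z k) ⁻¹' V) := hV.preimage (by fun_prop)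
  obtain ⟨U, hU, hUV⟩ := isOpen_pi_iff'.1 hopen z hxV
  have hev : ∀ᶠ a' in 𝓝 a, ∀ k, (F a' ∩ U k).Nonempty := eventually_all.2 fun k =>
    lowerHemicontinuousAt_iff.1 (hF a) (U k) (hU k).1 ⟨z k, hz k, (hU k).2⟩
  filter_upwards [hev] with a' ha'
  choose z' hz' hz'U using ha'
  exact ⟨∑ k, w k • z' k, (convex_convexHull ℝ _).sum_mem (fun k _ => hw k) hw_sum
    fun k _ => subset_convexHull ℝ _ (hz' k), hUV fun k _ => hz'U k⟩

theorem mem_thickening_iff_inter_ball_nonempty [PseudoMetricSpace E] {s : Set E} {x : E} {δ : ℝ} :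
    x ∈ thickening δ s ↔ (s ∩ ball x δ).Nonempty :=
  mem_thickening_iff.trans (exists_congr fun _ => and_congr_right fun _ => mem_ball'.symm)

theorem hasOpenLowerSections_thickening [PseudoMetricSpace E] {F : α → Set E}
    (hF : LowerHemicontinuous F) (ε : ℝ) : HasOpenLowerSections fun a => thickening ε (F a) := by
  simp only [hasOpenLowerSections_iff_isOpen, mem_thickening_iff_inter_ball_nonempty]
  exact fun x => lowerHemicontinuous_iff_isOpen_inter_nonempty.1 hF (ball x ε) isOpen_ball

theorem isClosed_setOf_exists_mem_dist_le [PseudoMetricSpace E] {F : α → Set E} {C : Set E}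
    (hF : IsClosed {q : α × E | q.2 ∈ F q.1}) (hC : IsCompact C) (hFC : ∀ a, F a ⊆ C) {f : α → E}
    (hf : Continuous f) (ε : ℝ) : IsClosed {a | ∃ k ∈ F a, dist (f a) k ≤ ε} := by
  have := isCompact_iff_compactSpace.1 hC
  have hclosed : IsClosed {q : α × C | (q.2 : E) ∈ F q.1 ∧ dist (f q.1) q.2 ≤ ε} :=
    (hF.preimage (continuous_id.prodMap continuous_subtype_val)).inter
      (isClosed_le ((hf.comp continuous_fst).dist (continuous_subtype_val.comp continuous_snd))
        continuous_const)
  convert isClosedMap_fst_of_compactSpace _ hclosed using 1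
  ext a
  exact ⟨fun ⟨k, hk, hdist⟩ => ⟨(a, ⟨k, hFC a hk⟩), ⟨hk, hdist⟩, rfl⟩,
    fun ⟨⟨_, k⟩, ⟨hk, hdist⟩, ha⟩ => ha ▸ ⟨k, hk, hdist⟩⟩

/- A polytope around `z₀` inside `F a` persists, up to `δ`, in the nearby values `F a'`; a convex
set whose `δ`-enlargement contains a ball of radius greater than `δ` must itself contain its centre
in its closure. -/
theorem hasOpenCGraph_of_lowerHemicontinuous [NormedAddCommGroup E] [NormedSpace ℝ E]
    [FiniteDimensional ℝ E] {F : α → Set E} (hF : LowerHemicontinuous F)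
    (hopen : ∀ a, IsOpen (F a)) (hconv : ∀ a, Convex ℝ (F a)) : HasOpenCGraph F := by
  refine isOpen_iff_mem_nhds.2 fun ⟨a, z₀⟩ hz₀ => ?_
  obtain ⟨u, hzu, huF⟩ :=
    (convex_singleton z₀).exists_subset_interior_convexHull_finset_of_isCompact
      isCompact_singleton (t := F a) (by rw [nhdsSet_singleton]; exact (hopen a).mem_nhds hz₀)
  obtain ⟨r, hr, hball⟩ := Metric.mem_nhds_iff.1 (mem_interior_iff_mem_nhds.1 (hzu rfl))
  obtain ⟨δ, hδ, rfl⟩ : ∃ δ > 0, r = 2 * δ := ⟨r / 2, half_pos hr, by ring⟩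
  have hev : ∀ᶠ a' in 𝓝 a, ∀ x ∈ u, (F a' ∩ ball x δ).Nonempty :=
    (Finset.eventually_all u).2 fun x hx => lowerHemicontinuousAt_iff.1 (hF a) _ isOpen_ball
      ⟨x, huF (subset_convexHull ℝ _ hx), mem_ball_self hδ⟩
  rw [nhds_prod_eq]
  filter_upwards [hev.prod_mk (ball_mem_nhds z₀ hδ)] with ⟨a', z⟩ ⟨ha', hz⟩
  have hhull : convexHull ℝ (u : Set E) ⊆ thickening δ (F a') :=
    convexHull_min (fun x hx => mem_thickening_iff_inter_ball_nonempty.2 (ha' x hx))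
      ((hconv a').thickening δ)
  have hclosure : ball z₀ δ ⊆ closure (F a') := fun x hx =>
    mem_closure_of_closedBall_subset_thickening (hconv a') hδ
      (((closedBall_subset_ball' (by linarith [mem_ball.1 hx])).trans hball).trans hhull)
  have hne : (interior (F a')).Nonempty := by
    rw [(hopen a').interior_eq]
    exact closure_nonempty_iff.1 ⟨z₀, hclosure (mem_ball_self hδ)⟩
  have hinterior := interior_maximal hclosure isOpen_ball hz
  rwa [(hconv a').interior_closure_eq_interior_of_nonempty_interior hne,
    (hopen a').interior_eq] at hinterior

end Hemicontinuity

section MaximalElement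

variable {ι : Type*} [Finite ι] {E : ι → Type*} [∀ i, AddCommGroup (E i)] [∀ i, Module ℝ (E i)]
  [∀ i, TopologicalSpace (E i)] [∀ i, IsTopologicalAddGroup (E i)] [∀ i, ContinuousSMul ℝ (E i)]
  [∀ i, T2Space (E i)] [∀ i, FiniteDimensional ℝ (E i)]

/- If some `Φ i y` is nonempty for each `y`, then changing one coordinate of `y` to a point of such
a `Φ i y` gives local selections; a continuous selection of the convex hulls has a fixed point. -/
theorem exists_forall_eq_empty_of_hasOpenLowerSections {C : ∀ i, Set (E i)}
    (hC : ∀ i, IsCompact (C i)) (hCconv : ∀ i, Convex ℝ (C i)) (hCne : ∀ i, (C i).Nonempty)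
    {Φ : ∀ i, univ.pi C → Set (E i)} (hΦ : ∀ i, HasOpenLowerSections (Φ i))
    (hΦC : ∀ i y, Φ i y ⊆ C i) (hconv : ∀ i y, Convex ℝ (Φ i y))
    (hirrefl : ∀ i (y : univ.pi C), y.1 i ∉ Φ i y) : ∃ y, ∀ i, Φ i y = ∅ := by
  classical
  by_contra! hne
  have hQ : IsCompact (univ.pi C) := isCompact_univ_pi hC
  have hQconv : Convex ℝ (univ.pi C) := convex_pi fun i _ => hCconv i
  have := isCompact_iff_compactSpace.1 hQ
  obtain ⟨g, hg⟩ := exists_continuous_forall_mem_convex_of_local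
    (t := fun y : univ.pi C => convexHull ℝ (⋃ i, Function.update y.1 i '' Φ i y))
    (fun y => convex_convexHull ℝ _) fun y => by
      obtain ⟨i, z, hz⟩ := hne y
      refine ⟨_, hΦ i y z hz, fun y' => Function.update y'.1 i z,
        (continuous_subtype_val.update i continuous_const).continuousOn, fun y' hy' => ?_⟩
      exact subset_convexHull ℝ _ (mem_iUnion.2 ⟨i, z, hy', rfl⟩)
  have hgQ : ∀ y, g y ∈ univ.pi C := fun y => by
    refine convexHull_min (iUnion_subset fun i => ?_) hQconv (hg y)
    rintro _ ⟨z, hz, rfl⟩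
    exact (update_mem_pi_iff_of_mem y.2).2 fun _ => hΦC i y hz
  obtain ⟨y, hy⟩ := exists_isFixedPt_of_isCompact_convex hQ hQconv (univ_pi_nonempty_iff.2 hCne)
    (g.continuous.subtype_mk hgQ)
  exact notMem_convexHull_iUnion_update_image (hconv · y) (hirrefl · y)
    (congrArg Subtype.val hy ▸ hg y)

end MaximalElement

section Equilibrium

variable {ι : Type*} [Finite ι] {E : ι → Type*} [∀ i, NormedAddCommGroup (E i)]
  [∀ i, NormedSpace ℝ (E i)] [∀ i, FiniteDimensional ℝ (E i)] {C : ∀ i, Set (E i)}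
  {A P : ∀ i, univ.pi C → Set (E i)}

theorem exists_forall_dist_le_and_inter_eq_empty (hC : ∀ i, IsCompact (C i))
    (hCconv : ∀ i, Convex ℝ (C i)) (hCne : ∀ i, (C i).Nonempty)
    (hAclosed : ∀ i, IsClosed {q : univ.pi C × E i | q.2 ∈ A i q.1})
    (hAlsc : ∀ i, LowerHemicontinuous (A i)) (hAC : ∀ i y, A i y ⊆ C i)
    (hAne : ∀ i y, (A i y).Nonempty) (hAconv : ∀ i y, Convex ℝ (A i y))
    (hP : ∀ i, HasOpenLowerSections (P i)) (hPconv : ∀ i y, Convex ℝ (P i y))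
    (hPirrefl : ∀ i (y : univ.pi C), y.1 i ∉ P i y) {ε : ℝ} (hε : 0 < ε) :
    ∃ y : univ.pi C, ∀ i, (∃ k ∈ A i y, dist (y.1 i) k ≤ ε) ∧ P i y ∩ A i y = ∅ := by
  let B : ι → Set (univ.pi C) := fun i => {y | ∃ k ∈ A i y, dist (y.1 i) k ≤ ε}
  have hB : ∀ i, IsClosed (B i) := fun i =>
    isClosed_setOf_exists_mem_dist_le (hAclosed i) (hC i) (hAC i)
      ((continuous_apply i).comp continuous_subtype_val) ε
  let R : ∀ i, univ.pi C → Set (E i) := fun i y => {z | y ∈ B i → z ∈ P i y}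
  have hR : ∀ i, HasOpenLowerSections (R i) := fun i =>
    hasOpenLowerSections_iff_isOpen.2 fun z => by
      simp only [R, mem_ofPred_eq, imp_iff_not_or]
      exact (hB i).isOpen_compl.union (hasOpenLowerSections_iff_isOpen.1 (hP i) z)
  have hRconv : ∀ i y, Convex ℝ (R i y) := fun i y => by
    by_cases hy : y ∈ B i
    · simpa [R, hy] using hPconv i y
    · simpa [R, hy] using convex_univ
  obtain ⟨y, hy⟩ := exists_forall_eq_empty_of_hasOpenLowerSections hC hCconv hCne
    (Φ := fun i y => C i ∩ thickening ε (A i y) ∩ R i y)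
    (fun i => (HasOpenLowerSections.const.inter
      (hasOpenLowerSections_thickening (hAlsc i) ε)).inter (hR i))
    (fun i y => inter_subset_left.trans inter_subset_left)
    (fun i y => ((hCconv i).inter ((hAconv i y).thickening ε)).inter (hRconv i y))
    fun i y ⟨⟨_, hthick⟩, hyR⟩ => by
      obtain ⟨k, hk, hdist⟩ := mem_thickening_iff.1 hthick
      exact hPirrefl i y (hyR ⟨k, hk, hdist.le⟩)
  have hempty : ∀ i, ∀ k ∈ A i y, k ∉ R i y := fun i k hk hkR =>
    (hy i).subset ⟨⟨hAC i y hk, self_subset_thickening hε _ hk⟩, hkR⟩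
  refine ⟨y, fun i => ⟨?_, ?_⟩⟩
  · by_contra hyB
    obtain ⟨k, hk⟩ := hAne i y
    exact hempty i k hk fun h => absurd h hyB
  · exact eq_empty_of_forall_notMem fun z ⟨hzP, hzA⟩ => hempty i z hzA fun _ => hzP

theorem exists_forall_mem_and_inter_eq_empty (hC : ∀ i, IsCompact (C i))
    (hCconv : ∀ i, Convex ℝ (C i)) (hCne : ∀ i, (C i).Nonempty)
    (hAclosed : ∀ i, IsClosed {q : univ.pi C × E i | q.2 ∈ A i q.1})
    (hAlsc : ∀ i, LowerHemicontinuous (A i)) (hAC : ∀ i y, A i y ⊆ C i)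
    (hAne : ∀ i y, (A i y).Nonempty) (hAconv : ∀ i y, Convex ℝ (A i y))
    (hP : ∀ i, HasOpenCGraph (P i)) (hPconv : ∀ i y, Convex ℝ (P i y))
    (hPirrefl : ∀ i (y : univ.pi C), y.1 i ∉ P i y) :
    ∃ y : univ.pi C, ∀ i, y.1 i ∈ A i y ∧ P i y ∩ A i y = ∅ := by
  have := isCompact_iff_compactSpace.1 (isCompact_univ_pi hC)
  choose y hy using fun n : ℕ => exists_forall_dist_le_and_inter_eq_empty hC hCconv hCne hAclosed
    hAlsc hAC hAne hAconv (fun i => (hP i).hasOpenLowerSections) hPconv hPirrefl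
    (Nat.one_div_pos_of_nat (α := ℝ) (n := n))
  obtain ⟨yt, φ, hφ, hlim⟩ := CompactSpace.tendsto_subseq y
  refine ⟨yt, fun i => ⟨?_, ?_⟩⟩
  · choose k hk hdist using fun n => (hy n i).1
    have hlim_i : Tendsto (fun n => (y (φ n)).1 i) atTop (𝓝 (yt.1 i)) :=
      (((continuous_apply i).comp continuous_subtype_val).tendsto yt).comp hlim
    have hdist_lim : Tendsto (fun n => dist ((y (φ n)).1 i) (k (φ n))) atTop (𝓝 0) :=
      squeeze_zero (fun _ => dist_nonneg) (fun n => hdist (φ n))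
        (tendsto_one_div_add_atTop_nhds_zero_nat.comp hφ.tendsto_atTop)
    exact (hAclosed i).mem_of_tendsto
      (hlim.prodMk_nhds ((tendsto_iff_of_dist hdist_lim).1 hlim_i))
      (Eventually.of_forall fun n => hk (φ n))
  · by_contra! hne
    rw [inter_comm] at hne
    have hopen : IsOpen {y | (A i y ∩ P i y).Nonempty} := by
      simpa using lowerHemicontinuous_iff_isOpen_inter_nonempty.1
        ((hAlsc i).inter_hasOpenCGraph (hP i)) univ isOpen_univ
    obtain ⟨n, z, hzA, hzP⟩ := (hlim.eventually (hopen.mem_nhds hne)).exists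
    exact (hy (φ n) i).2.subset ⟨hzP, hzA⟩

end Equilibrium

section ProjectedSolution

section ProductSet

variable {ι : Type*} {E : ι → Type*} {S : ∀ i, Set (E i)}

theorem nonempty_setOf_forall_piLp_mem (hS : ∀ i, (S i).Nonempty) :
    {x : PiLp 2 E | ∀ i, x i ∈ S i}.Nonempty :=
  ⟨WithLp.toLp 2 fun i => (hS i).some, fun i => (hS i).some_mem⟩

theorem isClosed_setOf_forall_piLp_mem [∀ i, TopologicalSpace (E i)] (hS : ∀ i, IsClosed (S i)) :
    IsClosed {x : PiLp 2 E | ∀ i, x i ∈ S i} := by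
  rw [Set.ofPred_forall]
  exact isClosed_iInter fun i => (hS i).preimage (PiLp.continuous_apply 2 E i)

theorem convex_setOf_forall_piLp_mem [∀ i, AddCommGroup (E i)] [∀ i, Module ℝ (E i)]
    (hS : ∀ i, Convex ℝ (S i)) : Convex ℝ {x : PiLp 2 E | ∀ i, x i ∈ S i} :=
  fun _ hx _ hy _ _ ha hb hab i => hS i (hx i) (hy i) ha hb hab

theorem isCompact_closure_biUnion_of_piLp {α : Type*} [∀ i, TopologicalSpace (E i)]
    [∀ i, R1Space (E i)] {X : Set α} {K : ∀ i, α → Set (E i)}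
    (hne : ∀ i, ∀ x ∈ X, (K i x).Nonempty)
    (hK : IsCompact (closure (⋃ x ∈ X, {y : PiLp 2 E | ∀ i, y i ∈ K i x}))) (i : ι) :
    IsCompact (closure (⋃ x ∈ X, K i x)) := by
  classical
  refine (hK.image (PiLp.continuous_apply 2 E i)).closure_of_subset
    (iUnion₂_subset fun x hx z hz => ?_)
  choose y hy using fun j => hne j x hx
  refine ⟨WithLp.toLp 2 (Function.update y i z), subset_closure (mem_biUnion hx fun j => ?_),
    Function.update_self i z y⟩
  exact (update_mem_pi_iff_of_mem (s := univ) (t := (K · x)) fun j _ => hy j).2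
    (fun _ => hz) j (mem_univ j)

end ProductSet

theorem exists_projected_solution_GNEP_compact_general {ι : Type*} [Fintype ι] {E : ι → Type*}
    [∀ i, NormedAddCommGroup (E i)] [∀ i, InnerProductSpace ℝ (E i)]
    [∀ i, FiniteDimensional ℝ (E i)] {X : Set (PiLp 2 E)} {K P : ∀ i, PiLp 2 E → Set (E i)}
    (hX : X.Nonempty) (hXclosed : IsClosed X) (hXconv : Convex ℝ X)
    (hKclosed : ∀ i, IsClosed {q : PiLp 2 E × E i | q.1 ∈ X ∧ q.2 ∈ K i q.1})
    (hKlsc : ∀ i, LscOn (K i) X) (hK : ∀ i, ∀ x ∈ X, (K i x).Nonempty ∧ Convex ℝ (K i x))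
    (hPlsc : ∀ i, LscOn (P i) {y | ∀ i, y i ∈ convexHull ℝ (closure (⋃ x ∈ X, K i x))})
    (hP : ∀ i, ∀ y ∈ {y : PiLp 2 E | ∀ i, y i ∈ convexHull ℝ (closure (⋃ x ∈ X, K i x))},
      IsOpen (P i y) ∧ y i ∉ convexHull ℝ (P i y))
    (hKX : IsCompact (closure (⋃ x ∈ X, {y : PiLp 2 E | ∀ i, y i ∈ K i x}))) :
    ∃ xt ∈ X, ∃ yt : PiLp 2 E, ‖yt - xt‖ = ⨅ w : X, ‖yt - (w : PiLp 2 E)‖ ∧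
      ∀ i, yt i ∈ K i xt ∧ P i yt ∩ K i xt = ∅ := by
  obtain ⟨p, hp⟩ := exists_isMetricProjection hX hXclosed.isComplete hXconv
  let C : ∀ i, Set (E i) := fun i => convexHull ℝ (closure (⋃ x ∈ X, K i x))
  have hKC : ∀ i, ∀ x ∈ X, K i x ⊆ C i := fun i x hx =>
    ((subset_biUnion_of_mem (u := K i) hx).trans subset_closure).trans (subset_convexHull ℝ _)
  have hC : ∀ i, IsCompact (C i) := fun i => isCompact_convexHull_of_finiteDimensional
    (isCompact_closure_biUnion_of_piLp (fun i x hx => (hK i x hx).1) hKX i)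
  have hCne : ∀ i, (C i).Nonempty := fun i =>
    let ⟨x, hx⟩ := hX
    (hK i x hx).1.mono (hKC i x hx)
  let y' : univ.pi C → PiLp 2 E := fun y => WithLp.toLp 2 y.1
  have hy' : Continuous y' := (PiLp.continuous_toLp 2 E).comp continuous_subtype_val
  have hy'C : ∀ y i, y' y i ∈ C i := fun y i => y.2 i (mem_univ i)
  have hpy' : Continuous fun y => p (y' y) := (hp.continuous hXconv).comp hy'
  have hpX : ∀ y, p (y' y) ∈ X := fun y => (hp (y' y)).1
  have hgraph : ∀ i, IsClosed {q : univ.pi C × E i | q.2 ∈ K i (p (y' q.1))} := fun i => by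
    simpa [preimage, hpX] using (hKclosed i).preimage (hpy'.prodMap continuous_id)
  have hPgraph : ∀ i, HasOpenCGraph fun y => convexHull ℝ (P i (y' y)) := fun i =>
    hasOpenCGraph_of_lowerHemicontinuous
      (lowerHemicontinuous_convexHull ((hPlsc i).lowerHemicontinuous_comp hy' hy'C))
      (fun y => (hP i _ (hy'C y)).1.convexHull) fun y => convex_convexHull ℝ _
  obtain ⟨y, hy⟩ := exists_forall_mem_and_inter_eq_empty hC (fun i => convex_convexHull ℝ _) hCne
    hgraph (fun i => (hKlsc i).lowerHemicontinuous_comp hpy' hpX) (fun i y => hKC i _ (hpX y))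
    (fun i y => (hK i _ (hpX y)).1) (fun i y => (hK i _ (hpX y)).2) hPgraph
    (fun i y => convex_convexHull ℝ _) fun i y => (hP i _ (hy'C y)).2
  exact ⟨p (y' y), hpX y, y' y, (hp (y' y)).2, fun i => ⟨(hy i).1,
    subset_empty_iff.1 ((inter_subset_inter_left _ (subset_convexHull ℝ _)).trans (hy i).2.subset)⟩⟩

end ProjectedSolution

end

/-- Under (a) each `X_i` nonempty compact convex, (b) each `K_i`
closed and l.s.c. with nonempty convex values on `X`, (c) each `P_i` l.s.c.,
(d) for every `y ∈ ∏_i co(cl(K_i(X)))` the set `P_i(y)` is open and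
`y_i ∉ co(P_i(y))`, and with `K(X)` relatively compact, the generalized Nash game
`Γ = (X_i, K_i, P_i)_i` admits a projected solution. -/
theorem exists_projected_solution_GNEP_compact
    (N : ℕ) (hN : 1 ≤ N) (d : Fin N → ℕ)
    (Xi : ∀ i : Fin N, Set (Vec (d i)))
    (Ki : ∀ i : Fin N, Strat N d → Set (Vec (d i)))
    (P : ∀ i : Fin N, Strat N d → Set (Vec (d i)))
    -- the joint choice set `X = ∏ X_i`
    (X : Set (Strat N d)) (hX : X = {x : Strat N d | ∀ i, x i ∈ Xi i})
    -- the set `∏_i co(cl(K_i(X)))`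
    (Q : Set (Strat N d))
    (hQ : Q = {y : Strat N d | ∀ i, y i ∈ convexHull ℝ (closure (⋃ x ∈ X, Ki i x))})
    -- the joint constraint map `K(x) = ∏ K_i(x)`
    (K : Strat N d → Set (Strat N d))
    (hK : ∀ x : Strat N d, K x = {y : Strat N d | ∀ i, y i ∈ Ki i x})
    -- (a) each `X_i` is nonempty, compact and convex
    (ha : ∀ i, (Xi i).Nonempty ∧ IsCompact (Xi i) ∧ Convex ℝ (Xi i))
    -- (b) each `K_i` is a closed l.s.c. map with nonempty convex values on `X`
    (hbclosed : ∀ i, IsClosed {q : Strat N d × Vec (d i) | q.1 ∈ X ∧ q.2 ∈ Ki i q.1})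
    (hblsc : ∀ i, LscOn (Ki i) X)
    (hbval : ∀ i, ∀ x ∈ X, (Ki i x).Nonempty ∧ Convex ℝ (Ki i x))
    -- (c) each `P_i` is lower semicontinuous
    (hc : ∀ i, LscOn (P i) (Set.univ : Set (Strat N d)))
    -- (d) `P_i(y)` is open and `y_i ∉ co(P_i(y))` for every `y ∈ Q`
    (hd : ∀ i, ∀ y ∈ Q, IsOpen (P i y) ∧ y i ∉ convexHull ℝ (P i y))
    -- `K(X)` is relatively compact
    (hKrel : IsCompact (closure (⋃ x ∈ X, K x))) :
    -- the GNEP `Γ` admits a projected solution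
    ∃ xt ∈ X, ∃ yt : Strat N d,
      (‖yt - xt‖ = ⨅ w : X, ‖yt - (w : Strat N d)‖) ∧
      ∀ i : Fin N, yt i ∈ Ki i xt ∧ P i yt ∩ Ki i xt = ∅ := by
  subst hX hQ
  obtain rfl : K = fun x => {y | ∀ i, y i ∈ Ki i x} := funext hK
  exact exists_projected_solution_GNEP_compact_general
    (nonempty_setOf_forall_piLp_mem fun i => (ha i).1)
    (isClosed_setOf_forall_piLp_mem fun i => (ha i).2.1.isClosed)
    (convex_setOf_forall_piLp_mem fun i => (ha i).2.2) hbclosed hblsc hbval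
    (fun i y _ V hV hne => (hc i y (Set.mem_univ y) V hV hne).imp fun U h =>
      ⟨h.1, h.2.1, fun y' hy' => h.2.2 y' ⟨hy'.1, Set.mem_univ y'⟩⟩) hd hKrel
end
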